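/- Let r > 0, s ∈ ℝ, and A = r·[[cos s, −sin s],[sin s, cos s]]. For a traceless symmetric 2×2 real matrix b, define φ(b) = ½(b₁₁ − b₂₂) + i·b₁₂ ∈ ℂ. Then ᵗA·b·A is again traceless symmetric and φ(ᵗA·b·A) = r²·e^{−2is}·φ(b). -/

import Mathlib

/-!
For symmetric `b`, `2 φ(b)` is the value of the complexified quadratic form of `b` on the isotropic
vector `(1, i)`. This vector is an eigenvector of every planar similarity `A`, with eigenvalue
`r e^{-is}`, so passing from `b` to `ᵗA b A` multiplies `φ` by the square of the eigenvalue.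
The trace is only scaled, since `A ᵗA = r² I`.
-/

open Matrix

/-- For a traceless symmetric `2×2` real matrix `b`, `φ(b) = ½(b₁₁ − b₂₂) + i·b₁₂ ∈ ℂ`. -/
noncomputable def phiC (b : Matrix (Fin 2) (Fin 2) ℝ) : ℂ :=
  ((b 0 0 - b 1 1) / 2 : ℝ) + Complex.I * (b 0 1 : ℝ)

section Congruence

variable {m n R : Type*} [Fintype m] [CommSemiring R]

theorem isSymm_transpose_mul_mul {b : Matrix m m R} (hb : b.IsSymm) (A : Matrix m n R) :
    (Aᵀ * b * A).IsSymm := by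
  rw [IsSymm, transpose_mul, transpose_mul, transpose_transpose, hb.eq, Matrix.mul_assoc]

variable [Fintype n]

theorem dotProduct_transpose_mul_mul_mulVec (A : Matrix m n R) (b : Matrix m m R) (v w : n → R) :
    v ⬝ᵥ (Aᵀ * b * A) *ᵥ w = (A *ᵥ v) ⬝ᵥ b *ᵥ (A *ᵥ w) := by
  rw [← mulVec_mulVec, ← mulVec_mulVec, dotProduct_mulVec, vecMul_transpose]

theorem trace_transpose_mul_mul_of_mul_transpose_eq_smul_one [DecidableEq m] {A : Matrix m n R}
    {c : R} (hA : A * Aᵀ = c • 1) (b : Matrix m m R) :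
    trace (Aᵀ * b * A) = c * trace b := by
  rw [trace_mul_cycle, hA, smul_mul, Matrix.one_mul, trace_smul, smul_eq_mul]

end Congruence

/-- The vector `(1, i) ∈ ℂ²`, isotropic for the complexified Euclidean form; it turns `phiC` into
the evaluation of a quadratic form. -/
def isotropicVec : Fin 2 → ℂ := ![1, Complex.I]

theorem two_mul_phiC {b : Matrix (Fin 2) (Fin 2) ℝ} (hb : b.IsSymm) :
    2 * phiC b = isotropicVec ⬝ᵥ b.map Complex.ofRealHom *ᵥ isotropicVec := by
  have hsymm : b 1 0 = b 0 1 := hb.apply 0 1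
  simp only [phiC, isotropicVec, dotProduct, mulVec, Fin.sum_univ_two, map_apply, hsymm,
    Complex.ofRealHom_eq_coe, cons_val_zero, cons_val_one]
  push_cast
  linear_combination -(b 1 1 : ℂ) * Complex.I_sq

theorem phiC_transpose_mul_mul_of_mulVec_eq_smul {A b : Matrix (Fin 2) (Fin 2) ℝ} {μ : ℂ}
    (hA : A.map Complex.ofRealHom *ᵥ isotropicVec = μ • isotropicVec) (hb : b.IsSymm) :
    phiC (Aᵀ * b * A) = μ ^ 2 * phiC b := by
  refine mul_left_cancel₀ (two_ne_zero (α := ℂ)) ?_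
  calc 2 * phiC (Aᵀ * b * A)
      = isotropicVec ⬝ᵥ (Aᵀ * b * A).map Complex.ofRealHom *ᵥ isotropicVec :=
        two_mul_phiC (isSymm_transpose_mul_mul hb A)
    _ = (μ • isotropicVec) ⬝ᵥ b.map Complex.ofRealHom *ᵥ (μ • isotropicVec) := by
        rw [Matrix.map_mul, Matrix.map_mul, transpose_map, dotProduct_transpose_mul_mul_mulVec,
          hA]
    _ = μ ^ 2 * (isotropicVec ⬝ᵥ b.map Complex.ofRealHom *ᵥ isotropicVec) := by
        rw [mulVec_smul, smul_dotProduct, dotProduct_smul, smul_eq_mul, smul_eq_mul, sq, mul_assoc]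
    _ = 2 * (μ ^ 2 * phiC b) := by
        rw [← two_mul_phiC hb, mul_left_comm]

/-- The matrix of the planar similarity `z ↦ r e^{is} z`, i.e. the frame change `A` with
parameters `r` and `s`. -/
noncomputable def similarityMatrix (r s : ℝ) : Matrix (Fin 2) (Fin 2) ℝ :=
  r • !![Real.cos s, -Real.sin s; Real.sin s, Real.cos s]

theorem similarityMatrix_mul_transpose (r s : ℝ) :
    similarityMatrix r s * (similarityMatrix r s)ᵀ = r ^ 2 • 1 := by
  have hrot : !![Real.cos s, -Real.sin s; Real.sin s, Real.cos s] *
      !![Real.cos s, -Real.sin s; Real.sin s, Real.cos s]ᵀ = 1 := by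
    ext i j
    fin_cases i <;> fin_cases j <;> simp [mul_apply, ← sq, mul_comm]
  rw [similarityMatrix, transpose_smul, smul_mul_smul_comm, hrot, sq]

theorem similarityMatrix_mulVec_isotropicVec (r s : ℝ) :
    (similarityMatrix r s).map Complex.ofRealHom *ᵥ isotropicVec =
      (r * Complex.exp (-s * Complex.I)) • isotropicVec := by
  rw [Complex.exp_mul_I, Complex.cos_neg, Complex.sin_neg]
  ext i
  fin_cases i <;>
    simp only [similarityMatrix, isotropicVec, mulVec, dotProduct, Fin.sum_univ_two, Fin.zero_eta,
      Fin.mk_one, map_apply, smul_of, smul_cons, smul_empty, of_apply, cons_val', cons_val_fin_one,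
      cons_val_zero, cons_val_one, Pi.smul_apply, smul_eq_mul, Complex.ofRealHom_eq_coe] <;>
    push_cast
  · ring
  · linear_combination (r * Complex.sin s : ℂ) * Complex.I_sq

theorem second_order_change_of_omega_general (r s : ℝ) {b : Matrix (Fin 2) (Fin 2) ℝ}
    (hb : b.IsSymm) :
    ((similarityMatrix r s)ᵀ * b * similarityMatrix r s).IsSymm ∧
    trace ((similarityMatrix r s)ᵀ * b * similarityMatrix r s) = r ^ 2 * trace b ∧
    phiC ((similarityMatrix r s)ᵀ * b * similarityMatrix r s) =
      (r : ℂ) ^ 2 * Complex.exp (-2 * (s : ℂ) * Complex.I) * phiC b := by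
  have heigenvalue_sq : ((r : ℂ) * Complex.exp (-s * Complex.I)) ^ 2 =
      (r : ℂ) ^ 2 * Complex.exp (-2 * (s : ℂ) * Complex.I) := by
    rw [mul_pow, ← Complex.exp_nat_mul]
    push_cast
    ring_nf
  refine ⟨isSymm_transpose_mul_mul hb _, ?_, ?_⟩
  · exact trace_transpose_mul_mul_of_mul_transpose_eq_smul_one
      (similarityMatrix_mul_transpose r s) b
  · rw [phiC_transpose_mul_mul_of_mulVec_eq_smul (similarityMatrix_mulVec_isotropicVec r s) hb,
      heigenvalue_sq]

/-- Let `r > 0`, `s ∈ ℝ`, and `A = r·[[cos s, −sin s],[sin s, cos s]]`. For a traceless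
symmetric `2×2` real matrix `b`, `ᵗA·b·A` is again traceless symmetric and
`φ(ᵗA·b·A) = r²·e^{−2is}·φ(b)`. -/
theorem second_order_change_of_omega (r s : ℝ) (hr : 0 < r)
    (b : Matrix (Fin 2) (Fin 2) ℝ) (hb : b.IsSymm) (htr : Matrix.trace b = 0) :
    ((r • !![Real.cos s, -Real.sin s; Real.sin s, Real.cos s])ᵀ * b *
        (r • !![Real.cos s, -Real.sin s; Real.sin s, Real.cos s])).IsSymm ∧
    Matrix.trace ((r • !![Real.cos s, -Real.sin s; Real.sin s, Real.cos s])ᵀ * b *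
        (r • !![Real.cos s, -Real.sin s; Real.sin s, Real.cos s])) = 0 ∧
    phiC ((r • !![Real.cos s, -Real.sin s; Real.sin s, Real.cos s])ᵀ * b *
        (r • !![Real.cos s, -Real.sin s; Real.sin s, Real.cos s])) =
      (r : ℂ) ^ 2 * Complex.exp (-2 * (s : ℂ) * Complex.I) * phiC b := by
  obtain ⟨hsymm, htrace, hphi⟩ := second_order_change_of_omega_general r s hb
  exact ⟨hsymm, htrace.trans (by rw [htr, mul_zero]), hphi⟩
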